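/- In the two-node, three-station, single-period instance with constraint (5) omitted, the minimum of Σ_{n,n'} E_{n,n'} over all feasible solutions equals 5 (strictly less than the optimal value 10 obtained when (5) is enforced), showing constraint (5) is necessary for trip integrity. -/

import Mathlib

/-!
A station whose inward and outward flows balance can spend at most half of its capacity on inward
flow, so the stations near a node leave at least its demand minus half of their joint capacity to
`E`. Only station `0` is near node `0`, which gives `10 - 10 / 2 = 5`. Self-trips
`E n n`, which no demand of the example asks for, count towards both flow equations at `n`; hence
the bound is attained with balanced station flows and `E` supported on `(0, 0)`.
-/

open Finset

/-- Neighbourhood relation of the two-node, three-station example: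
`Nb = {(s₁,n₁), (s₂,n₂), (s₃,n₂)}`. -/
def exNb (s : Fin 3) (n : Fin 2) : Prop :=
  (s = 0 ∧ n = 0) ∨ (s = 1 ∧ n = 1) ∨ (s = 2 ∧ n = 1)

instance : ∀ s n, Decidable (exNb s n) := fun s n => by unfold exNb; infer_instance

/-- Origin–destination matrix of the example: 10 trips each way between the two nodes. -/
def exOD (n n' : Fin 2) : ℝ := if n = n' then 0 else 10

/-- Feasibility for the single-period problem (OP) without constraint (5): station `s` has capacity
`v * z s`, the flows `Fp` and `Fm` are the paper's `F⁺` and `F⁻`, `E n n'` is the residual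
flow from `n` to `n'` not carried by stations, and the demands `f⁺` and `f⁻` at a node are the
corresponding column and row sums of `OD`. -/
structure IsFlowFeasible {S N : Type*} [Fintype S] [Fintype N] (Nb : S → N → Prop)
    [∀ s n, Decidable (Nb s n)] (v : ℝ) (z : S → ℝ) (OD : N → N → ℝ) (Fp Fm : S → N → ℝ)
    (E : N → N → ℝ) : Prop where
  inflow_nonneg : ∀ s n, 0 ≤ Fp s n
  outflow_nonneg : ∀ s n, 0 ≤ Fm s n
  residual_nonneg : ∀ n n', 0 ≤ E n n'
  inflow_eq_zero : ∀ s n, ¬ Nb s n → Fp s n = 0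
  outflow_eq_zero : ∀ s n, ¬ Nb s n → Fm s n = 0
  capacity : ∀ s, ∑ n with Nb s n, (Fp s n + Fm s n) ≤ v * z s
  inward : ∀ n, ∑ s with Nb s n, Fp s n + ∑ n', E n' n = ∑ n', OD n' n
  outward : ∀ n, ∑ s with Nb s n, Fm s n + ∑ n', E n n' = ∑ n', OD n n'
  balance : ∀ s, ∑ n with Nb s n, (Fp s n - Fm s n) = 0

namespace IsFlowFeasible

variable {S N : Type*} [Fintype S] [Fintype N] {Nb : S → N → Prop} [∀ s n, Decidable (Nb s n)]
  {v : ℝ} {z : S → ℝ} {OD : N → N → ℝ}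

section LowerBound

variable {Fp Fm : S → N → ℝ} {E : N → N → ℝ}

lemma sum_inflow_le_half_capacity (h : IsFlowFeasible Nb v z OD Fp Fm E) (s : S) :
    ∑ n with Nb s n, Fp s n ≤ v * z s / 2 := by
  have hcap := h.capacity s
  have hbal := h.balance s
  rw [sum_add_distrib] at hcap
  rw [sum_sub_distrib] at hbal
  linarith

lemma inflow_le_half_capacity (h : IsFlowFeasible Nb v z OD Fp Fm E) {s : S} {n : N}
    (hsn : Nb s n) : Fp s n ≤ v * z s / 2 :=
  calc Fp s n ≤ ∑ m with Nb s m, Fp s m :=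
        single_le_sum (f := Fp s) (fun m _ ↦ h.inflow_nonneg s m) (by simpa using hsn)
    _ ≤ v * z s / 2 := h.sum_inflow_le_half_capacity s

lemma demand_sub_half_capacity_le_sum (h : IsFlowFeasible Nb v z OD Fp Fm E) (n : N) :
    ∑ n', OD n' n - ∑ s with Nb s n, v * z s / 2 ≤ ∑ m, ∑ n', E m n' := by
  have station_share : ∑ s with Nb s n, Fp s n ≤ ∑ s with Nb s n, v * z s / 2 :=
    sum_le_sum fun s hs ↦ h.inflow_le_half_capacity (by simpa using hs)
  have residual_share : ∑ m, E m n ≤ ∑ m, ∑ n', E m n' :=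
    sum_le_sum fun m _ ↦
      single_le_sum (f := E m) (fun n' _ ↦ h.residual_nonneg m n') (mem_univ n)
  linarith [h.inward n]

end LowerBound

lemma of_balanced_of_diagonal [DecidableEq N] {F : S → N → ℝ} {e : N → ℝ}
    (F_nonneg : ∀ s n, 0 ≤ F s n) (e_nonneg : ∀ n, 0 ≤ e n)
    (F_eq_zero : ∀ s n, ¬ Nb s n → F s n = 0)
    (F_le : ∀ s, ∑ n with Nb s n, F s n ≤ v * z s / 2)
    (inward : ∀ n, ∑ s with Nb s n, F s n + e n = ∑ n', OD n' n)
    (outward : ∀ n, ∑ s with Nb s n, F s n + e n = ∑ n', OD n n') :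
    IsFlowFeasible Nb v z OD F F (Matrix.diagonal e) where
  inflow_nonneg := F_nonneg
  outflow_nonneg := F_nonneg
  residual_nonneg n n' := by
    rw [Matrix.diagonal_apply]
    split_ifs
    exacts [e_nonneg n, le_rfl]
  inflow_eq_zero := F_eq_zero
  outflow_eq_zero := F_eq_zero
  capacity s := by
    rw [sum_add_distrib]
    linarith [F_le s]
  inward n := by simpa [Matrix.diagonal_apply] using inward n
  outward n := by simpa [Matrix.diagonal_apply] using outward n
  balance s := by simp only [sub_self, sum_const_zero]

end IsFlowFeasible

lemma sum_exOD_right (n : Fin 2) : ∑ n', exOD n n' = 10 := by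
  fin_cases n <;> simp [exOD]

lemma sum_exOD_left (n : Fin 2) : ∑ n', exOD n' n = 10 := by
  fin_cases n <;> simp [exOD]

lemma filter_exNb_zero : univ.filter (fun s ↦ exNb s 0) = {0} := by decide

lemma filter_exNb_one : univ.filter (fun s ↦ exNb s 1) = {1, 2} := by decide

lemma card_filter_exNb (s : Fin 3) : #{n | exNb s n} = 1 := by
  decide +revert

lemma isFlowFeasible_with_selfTrip :
    IsFlowFeasible exNb 10 (fun _ ↦ 1) exOD (fun s n ↦ if exNb s n then 5 else 0)
      (fun s n ↦ if exNb s n then 5 else 0) (Matrix.diagonal ![5, 0]) := by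
  have node_flow (n : Fin 2) :
      ∑ s with exNb s n, (if exNb s n then (5 : ℝ) else 0) + ![5, 0] n = 10 := by
    rw [sum_ite_of_true (by simp), sum_const]
    fin_cases n
    · norm_num [filter_exNb_zero]
    · norm_num [filter_exNb_one, card_pair (show (1 : Fin 3) ≠ 2 by decide)]
  refine .of_balanced_of_diagonal (fun s n ↦ ?_) (fun n ↦ ?_) (fun s n h ↦ if_neg h) (fun s ↦ ?_)
    (fun n ↦ ?_) (fun n ↦ ?_)
  · positivity
  · fin_cases n <;> simp
  · rw [sum_ite_of_true (by simp), sum_const, card_filter_exNb]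
    norm_num
  · rw [node_flow, sum_exOD_left]
  · rw [node_flow, sum_exOD_right]

/-- In the two-node, three-station, single-period instance with
constraint (5) omitted, the minimum of `∑ n n', E n n'` over all feasible solutions
equals `5`, strictly less than the optimal value `10` obtained when (5) is enforced;
this shows constraint (5) is necessary for trip integrity. -/
theorem example_without_constraint5_min_is_five :
    IsLeast
      { x : ℝ | ∃ (Fp Fm : Fin 3 → Fin 2 → ℝ) (E : Fin 2 → Fin 2 → ℝ),
        (∀ s n, 0 ≤ Fp s n) ∧ (∀ s n, 0 ≤ Fm s n) ∧ (∀ n n', 0 ≤ E n n') ∧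
        (∀ s n, ¬ exNb s n → Fp s n = 0) ∧ (∀ s n, ¬ exNb s n → Fm s n = 0) ∧
        -- (1) station capacity, v = 10, z_s = 1
        (∀ s, ∑ n ∈ univ.filter (fun n => exNb s n), (Fp s n + Fm s n) ≤ 10 * 1) ∧
        -- (2) inward flow
        (∀ n, ∑ s ∈ univ.filter (fun s => exNb s n), Fp s n + ∑ n', E n' n
            = ∑ n', exOD n' n) ∧
        -- (3) outward flow
        (∀ n, ∑ s ∈ univ.filter (fun s => exNb s n), Fm s n + ∑ n', E n n'
            = ∑ n', exOD n n') ∧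
        -- (4) zero net flow
        (∀ s, ∑ n ∈ univ.filter (fun n => exNb s n), (Fp s n - Fm s n) = 0) ∧
        x = ∑ n, ∑ n', E n n' } 5
    ∧ (5 : ℝ) < 10 := by
  refine ⟨⟨?attained, ?bound⟩, by norm_num⟩
  case attained =>
    obtain ⟨hFp, hFm, hE, hFp', hFm', hcap, hin, hout, hbal⟩ := isFlowFeasible_with_selfTrip
    exact ⟨_, _, _, hFp, hFm, hE, hFp', hFm', hcap, hin, hout, hbal,
      by simp [Matrix.diagonal_apply]⟩
  case bound =>
    rintro _ ⟨Fp, Fm, E, hFp, hFm, hE, hFp', hFm', hcap, hin, hout, hbal, rfl⟩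
    have h : IsFlowFeasible exNb 10 (fun _ ↦ 1) exOD Fp Fm E :=
      ⟨hFp, hFm, hE, hFp', hFm', hcap, hin, hout, hbal⟩
    calc (5 : ℝ) = ∑ n', exOD n' 0 - ∑ s with exNb s 0, 10 * 1 / 2 := by
          rw [sum_exOD_left, filter_exNb_zero, sum_singleton]
          norm_num
      _ ≤ ∑ n, ∑ n', E n n' := h.demand_sub_half_capacity_le_sum 0
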